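/- Let n_1, n_2 be positive integers, n := max{n_1, n_2}, and p_1, p_2 ∈ [2, ∞]. Define the bilinear form A : ℓ_{p_1}^{n_1} × ℓ_{p_2}^{n_2} → ℂ by A(x, y) = Σ_{i=1}^{n_1} Σ_{j=1}^{n_2} e^{2πi·ij/n} x_i y_j. Then ‖A‖ ≤ n^{1/2} · n_1^{1/2 − 1/p_1} · n_2^{1/2 − 1/p_2} (with the convention 1/∞ = 0). Note that A is unimodular, since all its coefficients e^{2πi·ij/n} have modulus 1. -/

import Mathlib

open scoped BigOperators ENNReal

noncomputable section

/-- The `ℓ_p` norm on `𝕂^n`, for `p ∈ [1, ∞]` (sup norm when `p = ∞`). -/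
def lpNorm {𝕂 : Type*} [RCLike 𝕂] (p : ℝ≥0∞) {n : ℕ} (x : Fin n → 𝕂) : ℝ :=
  if p = ∞ then ⨆ j, ‖x j‖ else (∑ j, ‖x j‖ ^ p.toReal) ^ (1 / p.toReal)

/-- The operator norm of an `m`-linear form `A : ℓ_{p 1}^{n 1} × ⋯ × ℓ_{p m}^{n m} → 𝕂`,
i.e. the supremum of `‖A x‖` over all `x` with `‖x k‖_{p k} ≤ 1` for every `k`. -/
def opNorm {𝕂 : Type*} [RCLike 𝕂] {m : ℕ} {n : Fin m → ℕ} (p : Fin m → ℝ≥0∞)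
    (A : MultilinearMap 𝕂 (fun k => Fin (n k) → 𝕂) 𝕂) : ℝ :=
  sSup {t | ∃ x : ∀ k, Fin (n k) → 𝕂, (∀ k, lpNorm (p k) (x k) ≤ 1) ∧ t = ‖A x‖}

/-- A multilinear form is unimodular if all its coefficients `A (e_{j 1}, …, e_{j m})`
have modulus 1. -/
def Unimodular {𝕂 : Type*} [RCLike 𝕂] {m : ℕ} {n : Fin m → ℕ}
    (A : MultilinearMap 𝕂 (fun k => Fin (n k) → 𝕂) 𝕂) : Prop :=
  ∀ j : ∀ k, Fin (n k), ‖A (fun k => Pi.single (j k) 1)‖ = 1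

/-- The `m`-linear form `z ↦ ∑_j c j • z^{(1)}_{j 1} ⋯ z^{(m)}_{j m}` determined by the
coefficients `c`. -/
def coeffForm {𝕂 : Type*} [RCLike 𝕂] {m : ℕ} {n : Fin m → ℕ} (c : (∀ k, Fin (n k)) → 𝕂) :
    MultilinearMap 𝕂 (fun k => Fin (n k) → 𝕂) 𝕂 :=
  ∑ j : ∀ k, Fin (n k), (MultilinearMap.mkPiRing 𝕂 (Fin m) (c j)).compLinearMap
    fun k => LinearMap.proj (j k)

/-- The conjugate exponent `p*` of `p ∈ [1,∞]`, defined by `1/p + 1/p* = 1`. -/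
def conjExp (p : ℝ≥0∞) : ℝ≥0∞ := (1 - 1/p)⁻¹

/-!
The coefficients form an `n₁ × n₂` block of the `n × n` Fourier matrix, whose rows are orthogonal of
squared length `n`. A matrix `M` with this property satisfies `‖xM‖₂ = √n ‖x‖₂` (Plancherel), so
the Cauchy–Schwarz inequality gives `|A(x, y)| ≤ √n ‖x‖₂ ‖y‖₂`, and passing to fewer rows or columns
preserves the bound. Hölder's inequality `‖x‖₂ ≤ m^{1/2 - 1/p} ‖x‖_p` on `𝕂^m` then moves it from
`p = 2` to all `p ≥ 2`. Any Hadamard matrix can take the place of the Fourier matrix.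
-/

section LpNorm

open MeasureTheory hiding lpNorm lpNorm_nonneg

variable {𝕂 : Type*} [RCLike 𝕂] {n : ℕ}

lemma lpNorm_nonneg (p : ℝ≥0∞) (x : Fin n → 𝕂) : 0 ≤ lpNorm p x := by
  unfold lpNorm
  split_ifs
  · exact Real.iSup_nonneg fun _ => norm_nonneg _
  · positivity

lemma lpNorm_two (x : Fin n → 𝕂) : lpNorm 2 x = √(∑ j, ‖x j‖ ^ 2) := by
  simp [lpNorm, Real.sqrt_eq_rpow]

lemma lpNorm_eq_toReal_eLpNorm_count {p : ℝ≥0∞} (hp : p ≠ 0) (x : Fin n → 𝕂) :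
    lpNorm p x = (eLpNorm x p Measure.count).toReal := by
  rcases eq_or_ne p ∞ with rfl | hp_top
  · simp only [lpNorm, if_true, eLpNorm_exponent_top, eLpNormEssSup_count]
    rw [ENNReal.toReal_iSup fun _ => enorm_ne_top]
    simp only [toReal_enorm]
  · rw [lpNorm, if_neg hp_top, eLpNorm_eq_lintegral_rpow_enorm_toReal hp hp_top, lintegral_count,
      tsum_fintype, ← ENNReal.toReal_rpow, ENNReal.toReal_sum fun _ _ => by finiteness]
    simp only [← ENNReal.toReal_rpow, toReal_enorm]

lemma lpNorm_le_rpow_mul_lpNorm {p q : ℝ≥0∞} (hp : p ≠ 0) (hpq : p ≤ q) (x : Fin n → 𝕂) :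
    lpNorm p x ≤ (n : ℝ) ^ ((1 / p).toReal - (1 / q).toReal) * lpNorm q x := by
  have hq : q ≠ 0 := (hp.bot_lt.trans_le hpq).ne'
  have exponent_nonneg : 0 ≤ (1 / p).toReal - (1 / q).toReal :=
    sub_nonneg.mpr (ENNReal.toReal_mono (by simpa using hp) (by gcongr))
  have eLpNorm_le : eLpNorm x p Measure.count ≤
      eLpNorm x q Measure.count * (n : ℝ≥0∞) ^ ((1 / p).toReal - (1 / q).toReal) := by
    simpa [Measure.count_univ] using
      eLpNorm_le_eLpNorm_mul_rpow_measure_univ hpq (.of_discrete (f := x) (μ := Measure.count))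
  have rhs_ne_top :
      eLpNorm x q Measure.count * (n : ℝ≥0∞) ^ ((1 / p).toReal - (1 / q).toReal) ≠ ∞ :=
    ENNReal.mul_ne_top (eLpNorm_count_lt_top_of_lt fun _ => enorm_lt_top).ne
      (ENNReal.rpow_ne_top_of_nonneg exponent_nonneg (ENNReal.natCast_ne_top n))
  rw [lpNorm_eq_toReal_eLpNorm_count hp, lpNorm_eq_toReal_eLpNorm_count hq, mul_comm,
    ← ENNReal.toReal_natCast, ENNReal.toReal_rpow, ← ENNReal.toReal_mul]
  exact ENNReal.toReal_mono rhs_ne_top eLpNorm_le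

end LpNorm

section MultilinearForm

variable {𝕂 : Type*} [RCLike 𝕂] {m : ℕ} {n : Fin m → ℕ}

lemma opNorm_le_of_forall_norm_le_mul_prod_lpNorm {p q : Fin m → ℝ≥0∞} (hq : ∀ k, q k ≠ 0)
    (hqp : ∀ k, q k ≤ p k) {A : MultilinearMap 𝕂 (fun k => Fin (n k) → 𝕂) 𝕂} {C : ℝ}
    (hC : 0 ≤ C) (hA : ∀ x, ‖A x‖ ≤ C * ∏ k, lpNorm (q k) (x k)) :
    opNorm p A ≤ C * ∏ k, (n k : ℝ) ^ ((1 / q k).toReal - (1 / p k).toReal) := by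
  refine Real.sSup_le ?_ (by positivity)
  rintro _ ⟨x, hx, rfl⟩
  refine (hA x).trans ?_
  gcongr with k
  · exact fun _ _ => lpNorm_nonneg _ _
  · exact (lpNorm_le_rpow_mul_lpNorm (hq k) (hqp k) (x k)).trans
      (mul_le_of_le_one_right (by positivity) (hx k))

lemma coeffForm_apply (c : (∀ k, Fin (n k)) → 𝕂) (x : ∀ k, Fin (n k) → 𝕂) :
    coeffForm c x = ∑ j, c j * ∏ k, x k (j k) := by
  simp [coeffForm, mul_comm]

lemma coeffForm_single (c : (∀ k, Fin (n k)) → 𝕂) (j : ∀ k, Fin (n k)) :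
    coeffForm c (fun k => Pi.single (j k) 1) = c j := by
  rw [coeffForm_apply, Fintype.sum_eq_single j]
  · simp
  · intro i hij
    obtain ⟨k, hk⟩ := Function.ne_iff.mp hij
    rw [Finset.prod_eq_zero (Finset.mem_univ k) (Pi.single_eq_of_ne hk 1), mul_zero]

lemma unimodular_coeffForm_iff {c : (∀ k, Fin (n k)) → 𝕂} :
    Unimodular (coeffForm c) ↔ ∀ j, ‖c j‖ = 1 := by
  simp only [Unimodular, coeffForm_single]

end MultilinearForm

section HadamardBlock

open Matrix

variable {𝕂 : Type*} [RCLike 𝕂]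

lemma coeffForm_eq_vecMul_dotProduct {n : Fin 2 → ℕ} (M : Matrix (Fin (n 0)) (Fin (n 1)) 𝕂)
    (x : ∀ k, Fin (n k) → 𝕂) :
    coeffForm (fun j => M (j 0) (j 1)) x = x 0 ᵥ* M ⬝ᵥ x 1 := by
  rw [coeffForm_apply, ← (piFinTwoEquiv fun k => Fin (n k)).symm.sum_comp,
    Fintype.sum_prod_type_right]
  simp only [dotProduct, vecMul, Finset.sum_mul, Fin.prod_univ_two]
  exact Finset.sum_congr rfl fun j _ => Finset.sum_congr rfl fun i _ => by
    simp [mul_left_comm, mul_assoc]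

lemma ofReal_sum_norm_sq {ι : Type*} [Fintype ι] (x : ι → 𝕂) :
    ((∑ i, ‖x i‖ ^ 2 : ℝ) : 𝕂) = x ⬝ᵥ star x := by
  simp [dotProduct, RCLike.mul_conj]

lemma sum_norm_sq_vecMul_of_mul_conjTranspose_eq_smul_one {ι κ : Type*} [Fintype ι] [DecidableEq ι]
    [Fintype κ] {M : Matrix ι κ 𝕂} {r : ℝ} (hM : M * Mᴴ = (r : 𝕂) • 1) (x : ι → 𝕂) :
    ∑ j, ‖(x ᵥ* M) j‖ ^ 2 = r * ∑ i, ‖x i‖ ^ 2 := by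
  apply RCLike.ofReal_injective (K := 𝕂)
  calc ((∑ j, ‖(x ᵥ* M) j‖ ^ 2 : ℝ) : 𝕂)
      = (x ᵥ* M) ⬝ᵥ star (x ᵥ* M) := ofReal_sum_norm_sq _
    _ = x ⬝ᵥ ((M * Mᴴ) *ᵥ star x) := by
      rw [star_vecMul, ← dotProduct_mulVec, mulVec_mulVec]
    _ = r * (x ⬝ᵥ star x) := by rw [hM, smul_mulVec, one_mulVec, dotProduct_smul, smul_eq_mul]
    _ = ((r * ∑ i, ‖x i‖ ^ 2 : ℝ) : 𝕂) := by rw [RCLike.ofReal_mul, ofReal_sum_norm_sq]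

lemma norm_vecMul_submatrix_dotProduct_le {m n : ℕ} {κ : Type*} [Fintype κ]
    {M : Matrix (Fin m) κ 𝕂} {r : ℝ} (hM : M * Mᴴ = (r : 𝕂) • 1) (e : Fin n ↪ κ)
    (x : Fin m → 𝕂) (y : Fin n → 𝕂) :
    ‖x ᵥ* M.submatrix id e ⬝ᵥ y‖ ≤ √r * (lpNorm 2 x * lpNorm 2 y) := by
  have sum_columns_le : ∑ j, ‖(x ᵥ* M) (e j)‖ ^ 2 ≤ ∑ j, ‖(x ᵥ* M) j‖ ^ 2 := by
    rw [← Finset.sum_map Finset.univ e fun j => ‖(x ᵥ* M) j‖ ^ 2]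
    exact Finset.sum_le_univ_sum_of_nonneg fun _ => by positivity
  calc ‖x ᵥ* M.submatrix id e ⬝ᵥ y‖
      ≤ ∑ j, ‖(x ᵥ* M) (e j) * y j‖ := norm_sum_le _ _
    _ = ∑ j, ‖(x ᵥ* M) (e j)‖ * ‖y j‖ := by simp only [norm_mul]
    _ ≤ √(∑ j, ‖(x ᵥ* M) (e j)‖ ^ 2) * √(∑ j, ‖y j‖ ^ 2) := Real.sum_mul_le_sqrt_mul_sqrt _ _ _
    _ ≤ √(∑ j, ‖(x ᵥ* M) j‖ ^ 2) * √(∑ j, ‖y j‖ ^ 2) := by gcongr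
    _ = √r * (lpNorm 2 x * lpNorm 2 y) := by
      rw [sum_norm_sq_vecMul_of_mul_conjTranspose_eq_smul_one hM,
        Real.sqrt_mul' _ (by positivity), ← lpNorm_two, ← lpNorm_two, mul_assoc]

variable {κ : Type*} [Fintype κ] [DecidableEq κ] {H : Matrix κ κ 𝕂}

lemma submatrix_mul_conjTranspose_of_isHadamard {ι : Type*} [DecidableEq ι]
    (hH : H.IsHadamard) (e : ι ↪ κ) :
    H.submatrix e id * (H.submatrix e id)ᴴ = (Fintype.card κ : 𝕂) • 1 := by
  rw [conjTranspose_submatrix, ← submatrix_mul H Hᴴ e id e Function.bijective_id,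
    hH.mul_conjTranspose]
  ext i j
  simp [Matrix.one_apply]

theorem toeplitz_bilinear_form_norm_bound_general (hH : H.IsHadamard) {n₁ n₂ : ℕ}
    (e₁ : Fin n₁ ↪ κ) (e₂ : Fin n₂ ↪ κ) {p : Fin 2 → ℝ≥0∞} (hp : ∀ k, 2 ≤ p k)
    {c : (∀ k : Fin 2, Fin (![n₁, n₂] k)) → 𝕂} (hc : ∀ j, c j = H (e₁ (j 0)) (e₂ (j 1))) :
    Unimodular (coeffForm c) ∧
      opNorm p (coeffForm c) ≤
        (Fintype.card κ : ℝ) ^ ((1 : ℝ) / 2)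
          * (n₁ : ℝ) ^ ((1 : ℝ) / 2 - (1 / p 0).toReal)
          * (n₂ : ℝ) ^ ((1 : ℝ) / 2 - (1 / p 1).toReal) := by
  have c_eq_block : c = fun j => H.submatrix e₁ e₂ (j 0) (j 1) := funext hc
  constructor
  · exact unimodular_coeffForm_iff.mpr fun j =>
      hc j ▸ CStarRing.norm_of_mem_unitary (hH.apply_mem _ _)
  have rows_orthogonal : H.submatrix e₁ id * (H.submatrix e₁ id)ᴴ =
      ((Fintype.card κ : ℝ) : 𝕂) • 1 := by
    rw [submatrix_mul_conjTranspose_of_isHadamard hH, RCLike.ofReal_natCast]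
  have euclidean_bound (x : ∀ k : Fin 2, Fin (![n₁, n₂] k) → 𝕂) :
      ‖coeffForm c x‖ ≤ √(Fintype.card κ) * ∏ k, lpNorm 2 (x k) := by
    rw [c_eq_block, Fin.prod_univ_two]
    refine (congrArg norm (coeffForm_eq_vecMul_dotProduct _ x)).trans_le ?_
    exact norm_vecMul_submatrix_dotProduct_le rows_orthogonal e₂ (x 0) (x 1)
  simpa [Fin.prod_univ_two, mul_assoc, Real.sqrt_eq_rpow] using
    opNorm_le_of_forall_norm_le_mul_prod_lpNorm (fun _ => two_ne_zero) hp (Real.sqrt_nonneg _)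
      euclidean_bound

end HadamardBlock

section FourierMatrix

open Matrix

/-- The `N × N` Fourier matrix of a complex number `ω`, meant to be a primitive `N`-th root of
unity. Rows and columns carry the indices `1, …, N`, while `Fin N` counts from `0`. -/
def fourierMatrix (ω : ℂ) (N : ℕ) : Matrix (Fin N) (Fin N) ℂ :=
  of fun i j => ω ^ ((i.1 + 1) * (j.1 + 1))

variable {N : ℕ}

lemma geom_sum_eq_ite_of_pow_eq_one {F : Type*} [Field F] [DecidableEq F] {ζ : F}
    (hζ : ζ ^ N = 1) :
    ∑ j ∈ Finset.range N, ζ ^ j = if ζ = 1 then (N : F) else 0 := by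
  split_ifs with h
  · simp [h]
  · rw [geom_sum_eq h, hζ, sub_self, zero_div]

variable {ω : ℂ}

lemma fourierMatrix_mul_conjTranspose_apply (hω : ‖ω‖ = 1) (i k : Fin N) :
    (fourierMatrix ω N * (fourierMatrix ω N)ᴴ) i k =
      (ω ^ (i.1 + 1) / ω ^ (k.1 + 1)) *
        ∑ j ∈ Finset.range N, (ω ^ (i.1 + 1) / ω ^ (k.1 + 1)) ^ j := by
  have hconj : star ω = ω⁻¹ := (Complex.inv_eq_conj hω).symm
  rw [Matrix.mul_apply, ← Fin.sum_univ_eq_sum_range, Finset.mul_sum]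
  refine Finset.sum_congr rfl fun j _ => ?_
  rw [← pow_succ', conjTranspose_apply, fourierMatrix, of_apply, of_apply, star_pow, hconj, inv_pow,
    pow_mul, pow_mul, ← div_eq_mul_inv, div_pow]

lemma fourierMatrix_mul_conjTranspose (hN : N ≠ 0) (hω : IsPrimitiveRoot ω N) :
    fourierMatrix ω N * (fourierMatrix ω N)ᴴ = (N : ℂ) • 1 := by
  have hω₀ : ω ≠ 0 := hω.ne_zero hN
  ext i k
  have ratio_eq_one_iff : ω ^ (i.1 + 1) / ω ^ (k.1 + 1) = 1 ↔ i = k := by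
    rw [div_eq_one_iff_eq (pow_ne_zero _ hω₀), pow_succ, pow_succ, mul_left_inj' hω₀, Fin.ext_iff]
    exact ⟨hω.pow_inj i.2 k.2, congrArg _⟩
  have ratio_pow : (ω ^ (i.1 + 1) / ω ^ (k.1 + 1)) ^ N = 1 := by
    rw [div_pow, pow_right_comm, hω.pow_eq_one, pow_right_comm, hω.pow_eq_one, one_pow, one_pow,
      div_one]
  rw [fourierMatrix_mul_conjTranspose_apply (hω.norm'_eq_one hN),
    geom_sum_eq_ite_of_pow_eq_one ratio_pow]
  rcases eq_or_ne i k with rfl | hik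
  · simp [hω₀]
  · simp [ratio_eq_one_iff, hik]

lemma isHadamard_fourierMatrix (hN : N ≠ 0) (hω : IsPrimitiveRoot ω N) :
    (fourierMatrix ω N).IsHadamard := by
  refine .of_mul_conjTranspose (fun i j => ?_) ?_ ?_
  · have hω_unitary : ω ∈ unitary ℂ := by
      rw [Unitary.mem_iff_star_mul_self, RCLike.star_def, Complex.conj_mul', hω.norm'_eq_one hN]
      norm_num
    exact pow_mem hω_unitary _
  · rw [Fintype.card_fin, fourierMatrix_mul_conjTranspose hN hω]
  · exact .of_ne_zero (by simpa using hN)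

lemma exp_two_pi_I_mul_div_eq_pow (k N : ℕ) :
    Complex.exp (2 * (Real.pi : ℂ) * Complex.I * (k : ℂ) / (N : ℂ)) =
      Complex.exp (2 * (Real.pi : ℂ) * Complex.I / (N : ℂ)) ^ k := by
  rw [← Complex.exp_nat_mul]
  ring_nf

end FourierMatrix

/-- Let `n = max n₁ n₂` and `p₁, p₂ ∈ [2,∞]`. The (unimodular) bilinear form
`A : ℓ_{p₁}^{n₁} × ℓ_{p₂}^{n₂} → ℂ` with coefficients `a_{ij} = e^{2πi·ij/n}` satisfies
`‖A‖ ≤ n^{1/2} · n₁^{1/2 − 1/p₁} · n₂^{1/2 − 1/p₂}`. -/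
theorem toeplitz_bilinear_form_norm_bound (n₁ n₂ : ℕ) (h₁ : 0 < n₁) (h₂ : 0 < n₂)
    (p : Fin 2 → ℝ≥0∞) (hp : ∀ k, 2 ≤ p k)
    (c : (∀ k : Fin 2, Fin (![n₁, n₂] k)) → ℂ)
    (hc : ∀ j, c j = Complex.exp (2 * (Real.pi : ℂ) * Complex.I *
      ((((j 0).1 + 1) * ((j 1).1 + 1) : ℕ) : ℂ) / ((max n₁ n₂ : ℕ) : ℂ))) :
    Unimodular (coeffForm c) ∧
      opNorm p (coeffForm c) ≤
        ((max n₁ n₂ : ℕ) : ℝ) ^ ((1 : ℝ) / 2)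
          * (n₁ : ℝ) ^ ((1 : ℝ) / 2 - (1 / p 0).toReal)
          * (n₂ : ℝ) ^ ((1 : ℝ) / 2 - (1 / p 1).toReal) := by
  have hn : max n₁ n₂ ≠ 0 := (lt_max_of_lt_left h₁).ne'
  simpa only [Fintype.card_fin] using toeplitz_bilinear_form_norm_bound_general
    (isHadamard_fourierMatrix hn (Complex.isPrimitiveRoot_exp _ hn))
    (Fin.castLEEmb (le_max_left n₁ n₂)) (Fin.castLEEmb (le_max_right n₁ n₂)) hp
    fun j => (hc j).trans (exp_two_pi_I_mul_div_eq_pow _ _)
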